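/- Let α > 0 be real and let n ≥ 2 and p ≥ 0 be integers. Then the monic quartic polynomial P(ρ) = ρ⁴ + a₃ ρ³ + a₂ ρ² + a₁ ρ + 1, with coefficients a₃ = −4 α^{-1} (2(n+1) − p), a₂ = −(2 + 8 p α^{-1}), a₁ = 4 α^{-1} (2n + p), has at least one real root ρ̄ satisfying ρ̄ > 1. -/

import Mathlib

/-- For `α > 0`, `n ≥ 2`, `p ≥ 0`, the monic quartic
`P(ρ) = ρ⁴ + a₃ρ³ + a₂ρ² + a₁ρ + 1` with Gaussian-quadrature coefficients
`a₃ = −4α⁻¹(2(n+1) − p)`, `a₂ = −(2 + 8pα⁻¹)`, `a₁ = 4α⁻¹(2n + p)`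
has at least one real root `ρ̄ > 1`. -/
theorem exists_root_gt_one_gauss (α : ℝ) (hα : 0 < α) (n p : ℕ) (hn : 2 ≤ n) :
    ∃ ρ : ℝ, 1 < ρ ∧
      ρ ^ 4 + (-(4 * α⁻¹ * (2 * ((n : ℝ) + 1) - (p : ℝ)))) * ρ ^ 3
        + (-(2 + 8 * (p : ℝ) * α⁻¹)) * ρ ^ 2
        + (4 * α⁻¹ * (2 * (n : ℝ) + (p : ℝ))) * ρ + 1 = 0 := by
  have hb : 0 < α⁻¹ := inv_pos.mpr hα
  generalize α⁻¹ = b at hb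
  have hn0 : (0 : ℝ) ≤ n := Nat.cast_nonneg n
  have hp0 : (0 : ℝ) ≤ p := Nat.cast_nonneg p
  generalize (n : ℝ) = x at hn0
  generalize (p : ℝ) = y at hp0
  set f : ℝ → ℝ := fun ρ => ρ ^ 4 + (-(4 * b * (2 * (x + 1) - y))) * ρ ^ 3
        + (-(2 + 8 * y * b)) * ρ ^ 2
        + (4 * b * (2 * x + y)) * ρ + 1 with hf
  obtain ⟨c, hc⟩ : ∃ c, c = 8 * b * (x + 1) := ⟨_, rfl⟩
  obtain ⟨d, hd⟩ : ∃ d, d = 2 + 8 * y * b := ⟨_, rfl⟩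
  have hc0 : 0 ≤ c := by rw [hc]; positivity
  have hd0 : 0 ≤ d := by rw [hd]; positivity
  obtain ⟨M, hM⟩ : ∃ M, M = 1 + c + d := ⟨_, rfl⟩
  have hM1 : 1 ≤ M := by linarith
  have hM0 : 0 ≤ M := by linarith
  have h1 : f 1 < 0 := by
    have : f 1 = -(8 * b) := by simp only [hf]; ring
    rw [this]; linarith
  have h2 : 0 < f M := by
    have e : f M = M ^ 2 * (M * (M - c - d) + d * (M - 1)) + 4 * b * y * M ^ 3
        + 4 * b * (2 * x + y) * M + 1 := by
      simp only [hf]; rw [hc, hd]; ring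
    rw [e]
    have h3 : 0 ≤ M - c - d := by linarith
    have h4 : 0 ≤ M - 1 := by linarith
    positivity
  have hcont : ContinuousOn f (Set.Icc 1 M) := by
    apply Continuous.continuousOn
    simp only [hf]; fun_prop
  obtain ⟨r, hr, hr0⟩ := intermediate_value_Icc hM1 hcont ⟨h1.le, h2.le⟩
  refine ⟨r, lt_of_le_of_ne hr.1 ?_, hr0⟩
  rintro rfl
  linarith
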